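/- For each t ∈ [0,1] the limit σ̂ₜ²(f) = lim_{m→∞} μ̂ₜ[(m^{−1/2} Σ_{k=0}^{m−1} f̂ₜ ∘ γₜᵏ)²] exists and equals μ̂ₜ(f̂ₜ²) + 2 Σ_{k=1}^∞ μ̂ₜ(f̂ₜ · (f̂ₜ ∘ γₜᵏ)), where the series converges absolutely (at an exponential rate). Moreover, the map [0,1] → ℝ≥0, t ↦ σ̂ₜ²(f), is uniformly continuous. -/

import Mathlib

open MeasureTheory Filter Topology Set UniformConvergence

noncomputable section

instance : Fact ((0:ℝ) < 1) := ⟨zero_lt_one⟩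

/-- The circle `𝕊 = ℝ/ℤ`. -/
abbrev Circle1 : Type := AddCircle (1 : ℝ)

/-- A `C²` expanding circle map with expansion `≥ lam` and `‖T''‖_∞ ≤ Astar`,
encoded by a lift `F : ℝ → ℝ` satisfying `F (x+1) = F x + deg`. -/
structure CM (lam Astar : ℝ) where
  F : ℝ → ℝ
  deg : ℤ
  lift_add_one : ∀ x : ℝ, F (x + 1) = F x + deg
  contDiff : ContDiff ℝ 2 F
  expanding : ∀ x : ℝ, lam ≤ deriv F x
  second_bound : ∀ x : ℝ, |deriv (deriv F) x| ≤ Astar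

namespace CM

variable {lam Astar : ℝ}

/-- The induced map on the circle. -/
def toMap (T : CM lam Astar) : Circle1 → Circle1 :=
  fun x => (↑(T.F ((AddCircle.equivIco 1 0 x : ℝ))) : Circle1)

/-- The derivative of `T`, as a function on the circle. -/
def dmap (T : CM lam Astar) : Circle1 → ℝ :=
  fun x => deriv T.F ((AddCircle.equivIco 1 0 x : ℝ))

end CM

/-- The `C¹` distance on the space of maps. -/
def dC1 {lam Astar : ℝ} (T₁ T₂ : CM lam Astar) : ℝ :=
  (⨆ x : Circle1, dist (T₁.toMap x) (T₂.toMap x)) + (⨆ x : Circle1, |T₁.dmap x - T₂.dmap x|)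

/-- The transfer operator `ℒ_T h (x) = ∑_{T y = x} h y / T' y`. -/
def transfer {lam Astar : ℝ} (T : CM lam Astar) (h : Circle1 → ℝ) : Circle1 → ℝ :=
  fun x => ∑' y : {y : Circle1 // T.toMap y = x}, h y / T.dmap y

/-- Iterated transfer operators `ℒ_k ⋯ ℒ_1` of the sequence `T_1, T_2, …` (`Ts i = T_i`). -/
def transferIter {lam Astar : ℝ} (Ts : ℕ → CM lam Astar) : ℕ → (Circle1 → ℝ) → (Circle1 → ℝ)
  | 0, h => h
  | (k+1), h => transfer (Ts (k+1)) (transferIter Ts k h)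

/-- Composition `T_k ∘ ⋯ ∘ T_1` as circle maps. -/
def mapIter {lam Astar : ℝ} (Ts : ℕ → CM lam Astar) : ℕ → Circle1 → Circle1
  | 0 => id
  | (k+1) => (Ts (k+1)).toMap ∘ mapIter Ts k

/-- Composition of the lifts `F_k ∘ ⋯ ∘ F_1`. -/
def liftIter {lam Astar : ℝ} (Ts : ℕ → CM lam Astar) : ℕ → ℝ → ℝ
  | 0 => id
  | (k+1) => (Ts (k+1)).F ∘ liftIter Ts k

/-- A real representative of `z`. -/
def zrep (z : Circle1) : ℝ := (AddCircle.equivIco 1 0 z : ℝ)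

/-- The coordinate on the cut circle `J_z = 𝕊 ∖ {z}`. -/
def arcCoord (z x : Circle1) : ℝ := ((AddCircle.equivIoc 1 (zrep z) x : ℝ))

/-- `|x − y|_z`: the length of the subarc of `J_z` connecting `x` and `y`. -/
def arcDist (z x y : Circle1) : ℝ := |arcCoord z x - arcCoord z y|

/-- `g` is Lipschitz on `J_z = 𝕊 ∖ {z}` with constant `L`. -/
def LipOnArc (z : Circle1) (L : ℝ) (g : Circle1 → ℝ) : Prop :=
  ∀ x y : Circle1, x ≠ z → y ≠ z → |g x - g y| ≤ L * arcDist z x y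

/-- A probability density w.r.t. the Haar–Lebesgue measure `𝔪` on the circle. -/
def IsProbDensity (ψ : Circle1 → ℝ) : Prop :=
  Integrable ψ volume ∧ (∫ x : Circle1, ψ x) = 1 ∧ ∀ x, 0 ≤ ψ x

/-- The class `𝒟_L`: positive probability densities whose logarithm is Lipschitz
with constant `L` on `J_z` for some `z`. -/
def memD (L : ℝ) (ψ : Circle1 → ℝ) : Prop :=
  IsProbDensity ψ ∧ (∀ x, 0 < ψ x) ∧ ∃ z : Circle1, LipOnArc z L (fun x => Real.log (ψ x))

/-- The `L¹(𝔪)` norm. -/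
def l1norm (h : Circle1 → ℝ) : ℝ := ∫ x : Circle1, |h x|

/-- The supremum norm. -/
def supNorm (h : Circle1 → ℝ) : ℝ := ⨆ x : Circle1, |h x|

/-- The Lipschitz constant of `h` (w.r.t. the metric of the circle). -/
def lipConst (h : Circle1 → ℝ) : ℝ :=
  sInf {L : ℝ | 0 ≤ L ∧ ∀ x y : Circle1, |h x - h y| ≤ L * dist x y}

/-- The Lipschitz norm `‖h‖_Lip = Lip(h) + ‖h‖_∞`. -/
def lipNorm (h : Circle1 → ℝ) : ℝ := lipConst h + supNorm h

/-- `ρ` is the density of the SRB measure of `T`: the density of a `T`-invariant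
probability measure equivalent to `𝔪`. -/
def IsSRBDensity {lam Astar : ℝ} (T : CM lam Astar) (ρ : Circle1 → ℝ) : Prop :=
  IsProbDensity ρ ∧ (∀ᵐ x : Circle1, 0 < ρ x) ∧
    Measure.map T.toMap (volume.withDensity (fun x => ENNReal.ofReal (ρ x))) =
      volume.withDensity (fun x => ENNReal.ofReal (ρ x))

section QDS

variable {lam Astar : ℝ}

/-- `x_{n,k} = T_{n,k} ∘ ⋯ ∘ T_{n,1}` for a triangular array. -/
def arrIter (Tarr : ℕ → ℕ → CM lam Astar) (n : ℕ) : ℕ → Circle1 → Circle1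
  | 0 => id
  | (k+1) => (Tarr n (k+1)).toMap ∘ arrIter Tarr n k

/-- `ℒ_{n,k} ⋯ ℒ_{n,1}` for a triangular array. -/
def arrTransfer (Tarr : ℕ → ℕ → CM lam Astar) (n : ℕ) : ℕ → (Circle1 → ℝ) → (Circle1 → ℝ)
  | 0, h => h
  | (k+1), h => transfer (Tarr n (k+1)) (arrTransfer Tarr n k h)

/-- `f_{n,k} = f ∘ T_{n,k} ∘ ⋯ ∘ T_{n,1}` evaluated at `x`. -/
def fnk (Tarr : ℕ → ℕ → CM lam Astar) (f : Circle1 → ℝ) (n k : ℕ) (x : Circle1) : ℝ :=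
  f (arrIter Tarr n k x)

/-- `ζₙ(x,t) = n⁻¹ (∑_{k<⌊nt⌋} f_{n,k}(x) + {nt}·f_{n,⌊nt⌋}(x))`. -/
def zetaP (Tarr : ℕ → ℕ → CM lam Astar) (f : Circle1 → ℝ) (n : ℕ) (x : Circle1) (t : ℝ) : ℝ :=
  (n : ℝ)⁻¹ * ((∑ k ∈ Finset.range ⌊(n : ℝ) * t⌋₊, fnk Tarr f n k x) +
    Int.fract ((n : ℝ) * t) * fnk Tarr f n ⌊(n : ℝ) * t⌋₊ x)

/-- `ξₙ(x,t) = √n ζₙ(x,t) − √n μ(ζₙ(·,t))` for a measure `μ`. -/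
def xiP (Tarr : ℕ → ℕ → CM lam Astar) (f : Circle1 → ℝ) (μ : Measure Circle1) (n : ℕ)
    (x : Circle1) (t : ℝ) : ℝ :=
  Real.sqrt n * zetaP Tarr f n x t - Real.sqrt n * ∫ y, zetaP Tarr f n y t ∂μ

/-- The Hölder continuity (exponent `η`) of the curve `γ` on `[0,1]`, w.r.t. `d_{C¹}`. -/
def HolderCurve (η : ℝ) (γ : ℝ → CM lam Astar) : Prop :=
  ∃ H : ℝ, ∀ s ∈ Icc (0:ℝ) 1, ∀ t ∈ Icc (0:ℝ) 1, dC1 (γ s) (γ t) ≤ H * |s - t| ^ η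

/-- The convergence-rate condition `sup_n n^η sup_t d_{C¹}(T_{n,⌊nt⌋}, γ_t) < ∞`. -/
def ArrayApprox (η : ℝ) (γ : ℝ → CM lam Astar) (Tarr : ℕ → ℕ → CM lam Astar) : Prop :=
  ∃ M : ℝ, ∀ n : ℕ, 1 ≤ n → ∀ t ∈ Icc (0:ℝ) 1,
    (n : ℝ) ^ η * dC1 (Tarr n ⌊(n : ℝ) * t⌋₊) (γ t) ≤ M

end QDS

/-- The path space: functions `[0,1] → ℝ` with the topology of uniform convergence;
continuous paths (with the supremum metric) embed isometrically. -/
abbrev PathSpace : Type := (Icc (0:ℝ) 1) →ᵤ ℝ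

instance : MeasurableSpace PathSpace := borel PathSpace

/-- A function `[0,1] → ℝ` (given as a function on `ℝ`) as a point of the path space. -/
def pathOf (g : ℝ → ℝ) : PathSpace := UniformFun.ofFun (fun t => g t)

/-- Evaluation of a path at time `t` (clamped to `[0,1]`). -/
def evalPath (t : ℝ) (ω : PathSpace) : ℝ := UniformFun.toFun ω (projIcc 0 1 zero_le_one t)


section Extra

variable {lam Astar : ℝ}

/-- `μ(ζₙ(·,t))` for the measure with density `ρ` w.r.t. `𝔪`. -/
def zetaMean (Tarr : ℕ → ℕ → CM lam Astar) (f : Circle1 → ℝ) (ρ : Circle1 → ℝ)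
    (n : ℕ) (t : ℝ) : ℝ :=
  ∫ y : Circle1, zetaP Tarr f n y t * ρ y

/-- `𝔪(ζₙ(·,t))`, the mean w.r.t. the Lebesgue measure. -/
def zetaMeanM (Tarr : ℕ → ℕ → CM lam Astar) (f : Circle1 → ℝ) (n : ℕ) (t : ℝ) : ℝ :=
  ∫ y : Circle1, zetaP Tarr f n y t

/-- `ξₙ(x,t) = √n ζₙ(x,t) − √n μ(ζₙ(·,t))`, where `μ` has density `ρ`. -/
def xiD (Tarr : ℕ → ℕ → CM lam Astar) (f : Circle1 → ℝ) (ρ : Circle1 → ℝ)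
    (n : ℕ) (x : Circle1) (t : ℝ) : ℝ :=
  Real.sqrt n * zetaP Tarr f n x t - Real.sqrt n * zetaMean Tarr f ρ n t

end Extra

/-- The σ-algebra `𝔉_t` on the path space, generated by the evaluations at times `s ∈ [0,t]`. -/
def pathFiltration (t : ℝ) : MeasurableSpace PathSpace :=
  ⨆ (s : ℝ) (_ : 0 ≤ s ∧ s ≤ t), MeasurableSpace.comap (evalPath s) (borel ℝ)

/-- The process `M_t(ω) = A(ω(t)) − A(ω(0)) − ½∫₀ᵗ σ̂ₛ²·A''(ω(s)) ds`. -/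
def MGproc (σ2 : ℝ → ℝ) (A : ℝ → ℝ) (t : ℝ) (ω : PathSpace) : ℝ :=
  A (evalPath t ω) - A (evalPath 0 ω) -
    (1/2) * ∫ s in (0:ℝ)..t, σ2 s * deriv (deriv A) (evalPath s ω)

/-- `P` solves the martingale problem on `C⁰([0,1],ℝ)` for the generator `½σ̂ₜ² d²/dx²`,
started at `0`:  `P` is a probability measure, concentrated on continuous paths starting at `0`,
and for every `A ∈ C_c^∞(ℝ)` the process `MGproc σ2 A` is a `P`-martingale w.r.t. the
natural filtration `𝔉_t`.  -/
def SolvesMartingaleProblem (σ2 : ℝ → ℝ) (P : Measure PathSpace) : Prop :=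
  IsProbabilityMeasure P ∧
  P {ω : PathSpace | evalPath 0 ω = 0} = 1 ∧
  P {ω : PathSpace | Continuous (UniformFun.toFun ω)} = 1 ∧
  ∀ A : ℝ → ℝ, ContDiff ℝ (⊤ : ℕ∞) A → HasCompactSupport A →
    (∀ t ∈ Icc (0:ℝ) 1, Integrable (MGproc σ2 A t) P) ∧
    (∀ t ∈ Icc (0:ℝ) 1, @Measurable PathSpace ℝ (pathFiltration t) _ (MGproc σ2 A t)) ∧
    (∀ s ∈ Icc (0:ℝ) 1, ∀ t ∈ Icc (0:ℝ) 1, s ≤ t →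
      P[MGproc σ2 A t | pathFiltration s] =ᵐ[P] MGproc σ2 A s)

end

namespace S11

variable {lam Astar : ℝ}

lemma F_per (T : CM lam Astar) (x : ℝ) : ((T.F (x+1) : ℝ) : Circle1) = (T.F x : Circle1) := by
  rw [T.lift_add_one]
  rw [AddCircle.coe_add]
  have : (((T.deg : ℤ) : ℝ) : Circle1) = 0 := by
    rw [AddCircle.coe_eq_zero_iff]
    exact ⟨T.deg, by simp⟩
  rw [this, add_zero]

lemma toMap_coe (T : CM lam Astar) (x : ℝ) : T.toMap (x : Circle1) = (T.F x : Circle1) := by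
  have hp : Function.Periodic (fun x : ℝ => (T.F x : Circle1)) 1 := F_per T
  have h1 : T.toMap (x : Circle1) = hp.lift ((AddCircle.equivIco 1 0 (x : Circle1) : ℝ) : Circle1) := by
    rw [Function.Periodic.lift_coe]; rfl
  rw [h1, AddCircle.coe_equivIco, Function.Periodic.lift_coe]

lemma F_cont (T : CM lam Astar) : Continuous T.F := T.contDiff.continuous

lemma F_diff (T : CM lam Astar) : Differentiable ℝ T.F := T.contDiff.differentiable (by norm_num)

lemma dF_diff (T : CM lam Astar) : Differentiable ℝ (deriv T.F) := by
  have h : ContDiff ℝ (1+1) T.F := T.contDiff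
  exact ((contDiff_succ_iff_deriv.1 h).2.2).differentiable (by norm_num)

lemma toMap_cont (T : CM lam Astar) : Continuous T.toMap := by
  have : Continuous (T.toMap ∘ (QuotientAddGroup.mk : ℝ → Circle1)) := by
    have h : (T.toMap ∘ (QuotientAddGroup.mk : ℝ → Circle1)) = fun x : ℝ => (T.F x : Circle1) := by
      funext x; exact toMap_coe T x
    rw [h]
    exact (AddCircle.continuous_mk' 1).comp (F_cont T)
  exact (QuotientAddGroup.isOpenQuotientMap_mk.isQuotientMap.continuous_iff).2 this

lemma F_exp (T : CM lam Astar) {x y : ℝ} (h : x ≤ y) : lam * (y - x) ≤ T.F y - T.F x := by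
  have := (convex_univ (𝕜 := ℝ) (E := ℝ)).mul_sub_le_image_sub_of_le_deriv (f := T.F) (C := lam)
    (F_cont T).continuousOn (F_diff T).differentiableOn (fun z _ => T.expanding z) x (mem_univ _) y (mem_univ _) h
  exact this

lemma dF_lip (T : CM lam Astar) (x y : ℝ) : |deriv T.F x - deriv T.F y| ≤ Astar * |x - y| := by
  have := (convex_univ (𝕜 := ℝ) (E := ℝ)).norm_image_sub_le_of_norm_deriv_le (f := deriv T.F) (C := Astar)
    (fun z _ => (dF_diff T).differentiableAt) (fun z _ => by simpa using T.second_bound z) (mem_univ y) (mem_univ x)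
  simpa using this

lemma dF_per (T : CM lam Astar) (x : ℝ) : deriv T.F (x+1) = deriv T.F x := by
  have h : (fun x => T.F (x+1)) = fun x => T.F x + T.deg := funext T.lift_add_one
  have h2 := congrArg (fun g => deriv g x) h
  simp only [deriv_add_const] at h2
  rw [← h2]
  exact (deriv_comp_add_const T.F 1 x).symm

/-- cone of log-Lipschitz functions. -/
structure Cone (a : ℝ) (ψ : Circle1 → ℝ) : Prop where
  cont : Continuous ψ
  nonneg : ∀ x, 0 ≤ ψ x
  le : ∀ x y : ℝ, ψ (x : Circle1) ≤ Real.exp (a * |x - y|) * ψ (y : Circle1)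

lemma Cone.mono {a b : ℝ} {ψ : Circle1 → ℝ} (h : Cone a ψ) (hab : a ≤ b) : Cone b ψ :=
  ⟨h.cont, h.nonneg, fun x y => (h.le x y).trans (by
    have := h.nonneg y
    gcongr)⟩

lemma Cone.mul {a b : ℝ} {ψ φ : Circle1 → ℝ} (h : Cone a ψ) (h' : Cone b φ) :
    Cone (a + b) (fun x => ψ x * φ x) :=
  ⟨h.cont.mul h'.cont, fun x => mul_nonneg (h.nonneg x) (h'.nonneg x), fun x y => by
    have := mul_le_mul (h.le x y) (h'.le x y) (h'.nonneg _) (by have := h.nonneg y; positivity)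
    refine this.trans (le_of_eq ?_)
    rw [add_mul, Real.exp_add]; ring⟩

lemma int_coe (ψ : Circle1 → ℝ) (t : ℝ) : ∫ x : Circle1, ψ x = ∫ x in t..t+1, ψ (x : Circle1) :=
  (AddCircle.intervalIntegral_preimage 1 t ψ).symm

lemma integ {ψ : Circle1 → ℝ} (h : Continuous ψ) : Integrable ψ (volume : Measure Circle1) :=
  h.integrable_of_hasCompactSupport (HasCompactSupport.of_compactSpace ψ)

instance : IsProbabilityMeasure (volume : Measure Circle1) := ⟨UnitAddCircle.measure_univ⟩

lemma Cone.lower {a : ℝ} (ha : 0 ≤ a) {ψ : Circle1 → ℝ} (h : Cone a ψ) (x : Circle1) :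
    Real.exp (-a) * ∫ y : Circle1, ψ y ≤ ψ x := by
  induction x using QuotientAddGroup.induction_on with
  | H x =>
  have h1 : ∫ y : Circle1, ψ y ≤ Real.exp a * ψ (x : Circle1) := by
    rw [int_coe ψ x]
    have : ∫ y in x..x+1, ψ (y : Circle1) ≤ ∫ y in x..x+1, Real.exp a * ψ (x : Circle1) := by
      apply intervalIntegral.integral_mono_on (by linarith)
      · exact (h.cont.comp (AddCircle.continuous_mk' 1)).intervalIntegrable _ _
      · simp
      · intro y hy
        refine (h.le y x).trans ?_
        have := h.nonneg x
        have h3 : |y - x| ≤ 1 := by rw [abs_le]; constructor <;> linarith [hy.1, hy.2]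
        have h4 : a * |y - x| ≤ a := by nlinarith
        gcongr
    simpa using this
  calc _ ≤ Real.exp (-a) * (Real.exp a * ψ (x : Circle1)) := by gcongr
    _ = _ := by rw [← mul_assoc, ← Real.exp_add]; simp

/-- the main push-forward lemma -/
lemma push (hlam : 1 < lam) (hA : 0 < Astar) (T : CM lam Astar) {a : ℝ} (ha : 0 ≤ a) {ψ : Circle1 → ℝ} (h : Cone a ψ) :
    ∃ φ : Circle1 → ℝ, Cone (a / lam + Astar / lam ^ 2) φ ∧ ∀ u : Circle1 → ℝ, Continuous u →
      ∫ x : Circle1, ψ x * u (T.toMap x) = ∫ x : Circle1, φ x * u x := by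
  have hl0 : 0 < lam := by linarith
  have hmono : StrictMono T.F := by
    intro x y hxy
    have := F_exp T hxy.le
    nlinarith [mul_pos hl0 (sub_pos.2 hxy)]
  have hsurj : Function.Surjective T.F := by
    apply (F_cont T).surjective
    · refine tendsto_atTop_mono' atTop (f₁ := fun x => T.F 0 + lam * x) ?_ ?_
      · filter_upwards [eventually_ge_atTop 0] with x hx
        have := F_exp T hx; linarith
      · exact tendsto_atTop_add_const_left _ _ (tendsto_id.const_mul_atTop hl0)
    · refine tendsto_atBot_mono' atBot (f₁ := fun x => T.F 0 + lam * x) ?_ ?_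
      · filter_upwards [eventually_le_atBot 0] with x hx
        have := F_exp T hx; linarith
      · exact tendsto_atBot_add_const_left _ _ (tendsto_id.const_mul_atBot hl0)
  let e := StrictMono.orderIsoOfSurjective T.F hmono hsurj
  let G : ℝ → ℝ := e.symm
  have hFG : ∀ x, T.F (G x) = x := fun x => e.apply_symm_apply x
  have hGF : ∀ x, G (T.F x) = x := fun x => e.symm_apply_apply x
  have hGc : Continuous G := e.symm.continuous
  have hGlip : ∀ x y, |G x - G y| ≤ |x - y| / lam := by
    have key : ∀ x y, x ≤ y → |G x - G y| ≤ |x - y| / lam := by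
      intro x y hxy
      have hg : G x ≤ G y := e.symm.monotone hxy
      have := F_exp T hg
      rw [hFG, hFG] at this
      rw [le_div_iff₀ hl0, abs_of_nonpos (by linarith), abs_of_nonpos (by linarith)]
      linarith
    intro x y
    rcases le_total x y with hxy | hxy
    · exact key x y hxy
    · rw [abs_sub_comm, abs_sub_comm x]; exact key y x hxy
  obtain ⟨d, hd⟩ : ∃ d : ℕ, (T.deg : ℝ) = d := by
    have h1 := F_exp T (zero_le_one (α := ℝ))
    have h2 := T.lift_add_one 0
    rw [zero_add] at h2
    have : (0:ℝ) < T.deg := by linarith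
    have h3 : 0 < T.deg := by exact_mod_cast this
    refine ⟨T.deg.toNat, ?_⟩
    have : ((T.deg.toNat : ℤ) : ℝ) = T.deg := by rw [Int.toNat_of_nonneg h3.le]
    rw [← this]; rfl
  have hGd : ∀ x, G (x + d) = G x + 1 := by
    intro x
    apply hmono.injective
    rw [hFG, T.lift_add_one, hFG, hd]
  have hpos : ∀ x, 0 < deriv T.F x := fun x => hl0.trans_le (T.expanding x)
  have hdc : Continuous (deriv T.F) := (dF_diff T).continuous
  let w : ℝ → ℝ := fun x => ψ (G x : Circle1) / deriv T.F (G x)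
  have hwc : Continuous w :=
    ((h.cont.comp (AddCircle.continuous_mk' 1)).comp hGc).div (hdc.comp hGc) (fun x => (hpos _).ne')
  have hwper : ∀ x, w (x + d) = w x := by
    intro x
    simp only [w]
    rw [hGd, dF_per]
    have : ((G x + 1 : ℝ) : Circle1) = (G x : Circle1) := AddCircle.coe_add_period 1 _
    rw [this]
  have hwnn : ∀ x, 0 ≤ w x := fun x => div_nonneg (h.nonneg _) (hpos _).le
  have hwle : ∀ x y, w x ≤ Real.exp ((a / lam + Astar / lam ^ 2) * |x - y|) * w y := by
    intro x y
    have h1 : ψ (G x : Circle1) ≤ Real.exp (a / lam * |x - y|) * ψ (G y : Circle1) := by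
      refine (h.le (G x) (G y)).trans ?_
      have := h.nonneg (G y)
      have h2 : a * |G x - G y| ≤ a / lam * |x - y| := by
        calc a * |G x - G y| ≤ a * (|x - y| / lam) := by gcongr; exact hGlip x y
          _ = _ := by ring
      gcongr
    have h3 : deriv T.F (G y) ≤ Real.exp (Astar / lam ^ 2 * |x - y|) * deriv T.F (G x) := by
      have h4 := (abs_le.1 (dF_lip T (G x) (G y))).1
      have h5 : Astar * |G x - G y| ≤ Astar / lam * |x - y| := by
        calc Astar * |G x - G y| ≤ Astar * (|x - y| / lam) := by gcongr; exact hGlip x y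
          _ = _ := by ring
      have h6 : Astar / lam * |x - y| ≤ (Astar / lam ^ 2 * |x - y|) * deriv T.F (G x) := by
        have : Astar / lam * |x - y| = (Astar / lam ^ 2 * |x - y|) * lam := by field_simp
        rw [this]
        have := T.expanding (G x)
        gcongr
      have h7 := Real.add_one_le_exp (Astar / lam ^ 2 * |x - y|)
      have h8 := mul_le_mul_of_nonneg_right h7 (hpos (G x)).le
      linarith
    simp only [w]
    rw [add_mul, Real.exp_add, div_le_iff₀ (hpos _)]
    have h9 := h.nonneg (G y)
    calc ψ (G x : Circle1) ≤ Real.exp (a / lam * |x - y|) * ψ (G y : Circle1) * 1 := by simpa using h1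
      _ ≤ Real.exp (a / lam * |x - y|) * ψ (G y : Circle1) *
          ((Real.exp (Astar / lam ^ 2 * |x - y|) * deriv T.F (G x)) / deriv T.F (G y)) := by
          gcongr
          rwa [le_div_iff₀ (hpos _), one_mul]
      _ = _ := by ring
  let φ0 : ℝ → ℝ := fun x => ∑ j ∈ Finset.range d, w (x + j)
  have hφper : Function.Periodic φ0 1 := by
    intro x
    simp only [φ0]
    have h1 := Finset.sum_range_succ (fun j : ℕ => w (x + j)) d
    have h2 := Finset.sum_range_succ' (fun j : ℕ => w (x + j)) d
    rw [h1, hwper] at h2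
    have h3 : ∀ j : ℕ, w (x + 1 + j) = w (x + ((j + 1 : ℕ) : ℝ)) := by
      intro j; congr 1; push_cast; ring
    simp only [h3]
    simp only [Nat.cast_zero, add_zero] at h2
    linarith
  have hφc : Continuous φ0 := by
    apply continuous_finsetSum
    intro j _
    exact hwc.comp (continuous_id.add continuous_const)
  have hlift : ∀ x : ℝ, hφper.lift (x : Circle1) = φ0 x := fun x => hφper.lift_coe x
  refine ⟨hφper.lift, ⟨?_, ?_, ?_⟩, ?_⟩
  · exact (QuotientAddGroup.isOpenQuotientMap_mk.isQuotientMap.continuous_iff).2 hφc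
  · intro x
    induction x using QuotientAddGroup.induction_on with
    | H x => exact (hlift x).symm ▸ Finset.sum_nonneg (fun j _ => hwnn _)
  · intro x y
    rw [hlift, hlift]
    simp only [φ0]
    rw [Finset.mul_sum]
    apply Finset.sum_le_sum
    intro j _
    have := hwle (x + j) (y + j)
    simpa using this
  · intro u hu
    have huc : Continuous (fun x : ℝ => u (x : Circle1)) := hu.comp (AddCircle.continuous_mk' 1)
    have hup : ∀ (x : ℝ) (j : ℕ), u ((x + j : ℝ) : Circle1) = u (x : Circle1) := by
      intro x j
      congr 1
      rw [AddCircle.coe_add]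
      have : ((j : ℝ) : Circle1) = 0 := by
        rw [AddCircle.coe_eq_zero_iff]; exact ⟨j, by simp⟩
      rw [this, add_zero]
    let v : ℝ → ℝ := fun x => w x * u (x : Circle1)
    have hvc : Continuous v := hwc.mul huc
    have hvp : Function.Periodic v (d : ℝ) := by
      intro x; simp only [v]; rw [hwper, hup]
    have e1 : ∫ x : Circle1, hφper.lift x * u x = ∫ x in (0:ℝ)..d, v x := by
      rw [int_coe _ 0]
      simp only [hlift, φ0, zero_add]
      have : ∀ x : ℝ, (∑ j ∈ Finset.range d, w (x + j)) * u (x : Circle1) = ∑ j ∈ Finset.range d, v (x + j) := by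
        intro x; rw [Finset.sum_mul]; apply Finset.sum_congr rfl; intro j _; simp only [v]; rw [hup]
      simp only [this]
      rw [intervalIntegral.integral_finsetSum]
      · have h2 := intervalIntegral.sum_integral_adjacent_intervals (f := v) (μ := volume) (a := fun j : ℕ => (j : ℝ)) (n := d)
          (fun k _ => hvc.intervalIntegrable _ _)
        simp only [Nat.cast_zero] at h2
        rw [← h2]
        apply Finset.sum_congr rfl
        intro j _
        rw [intervalIntegral.integral_comp_add_right]
        congr 1 <;> push_cast <;> ring
      · intro j _
        exact (hvc.comp (continuous_id.add continuous_const)).intervalIntegrable _ _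
    have e2 : ∫ x in (0:ℝ)..d, v x = ∫ x in T.F 0..T.F 1, v x := by
      have h1 := hvp.intervalIntegral_add_eq 0 (T.F 0)
      have h2 := T.lift_add_one 0
      rw [zero_add] at h2 h1
      rw [h1, h2, hd]
    have e3 : ∫ x in T.F 0..T.F 1, v x = ∫ x in (0:ℝ)..1, (v ∘ T.F) x * deriv T.F x := by
      rw [intervalIntegral.integral_comp_mul_deriv (fun x _ => (F_diff T x).hasDerivAt) hdc.continuousOn hvc]
    rw [e1, e2, e3, int_coe _ 0, zero_add]
    apply intervalIntegral.integral_congr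
    intro x _
    simp only [Function.comp, v, w, hGF, toMap_coe]
    have := (hpos x).ne'
    field_simp

end S11
namespace S11

variable {lam Astar : ℝ}

lemma iter_cont (T : CM lam Astar) (n : ℕ) : Continuous (T.toMap^[n]) := (toMap_cont T).iterate n

lemma cone_const {a c : ℝ} (ha : 0 ≤ a) (hc : 0 ≤ c) : Cone a (fun _ => c) :=
  ⟨continuous_const, fun _ => hc, fun x y => by
    have : 1 ≤ Real.exp (a * |x - y|) := Real.one_le_exp (by positivity)
    nlinarith⟩

lemma dist_coe_le (x y : ℝ) : dist (x : Circle1) (y : Circle1) ≤ |x - y| := by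
  rw [dist_eq_norm, ← AddCircle.coe_sub]
  exact QuotientAddGroup.norm_mk_le_norm

lemma cone_lip {K : NNReal} {f : Circle1 → ℝ} (hf : LipschitzWith K f) (h1 : ∀ x, 1 ≤ f x) : Cone K f := by
  refine ⟨hf.continuous, fun x => zero_le_one.trans (h1 x), fun x y => ?_⟩
  have h2 := hf.dist_le_mul x y
  rw [Real.dist_eq] at h2
  have h3 := (abs_le.1 h2).2
  have h4 : (K:ℝ) * dist (x : Circle1) (y : Circle1) ≤ K * |x - y| := by
    gcongr; exact dist_coe_le x y
  have h5 := Real.add_one_le_exp ((K:ℝ) * |x - y|)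
  have h6 := mul_le_mul_of_nonneg_right h5 (zero_le_one.trans (h1 y))
  have h7 : (K:ℝ) * |x - y| * 1 ≤ K * |x - y| * f y := by gcongr; exact h1 y
  linarith

lemma pushIter (hlam : 1 < lam) (hA : 0 < Astar) (T : CM lam Astar) {a : ℝ} (ha : 0 ≤ a)
    (ha' : a / lam + Astar / lam ^ 2 ≤ a) (n : ℕ) : ∀ {ψ : Circle1 → ℝ} (_ : Cone a ψ),
    ∃ φ : Circle1 → ℝ, Cone a φ ∧ ∀ u : Circle1 → ℝ, Continuous u →
      ∫ x : Circle1, ψ x * u (T.toMap^[n] x) = ∫ x : Circle1, φ x * u x := by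
  induction n with
  | zero => intro ψ h; exact ⟨ψ, h, fun u _ => rfl⟩
  | succ n ih =>
    intro ψ h
    obtain ⟨φ, hφ, h1⟩ := push hlam hA T ha h
    obtain ⟨φ', hφ', h2⟩ := ih (hφ.mono ha')
    refine ⟨φ', hφ', fun u hu => ?_⟩
    rw [← h2 u hu]
    exact h1 _ (hu.comp (iter_cont T n))

noncomputable def aa (lam Astar a : ℝ) : ℝ := a / lam + Astar / lam ^ 2
noncomputable def kap (lam Astar a : ℝ) : ℝ := (1 - aa lam Astar a / a) * Real.exp (- aa lam Astar a)

lemma aa_pos (hlam : 1 < lam) (hA : 0 < Astar) {a : ℝ} (ha : 0 < a) : 0 < aa lam Astar a := by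
  unfold aa; positivity

lemma kap_mem (hlam : 1 < lam) (hA : 0 < Astar) {a : ℝ} (ha : 0 < a) (ha' : aa lam Astar a < a) :
    kap lam Astar a ∈ Ioo (0:ℝ) 1 := by
  have h1 := aa_pos hlam hA ha
  have h2 : aa lam Astar a / a < 1 := by rwa [div_lt_one ha]
  have h3 : 0 < aa lam Astar a / a := by positivity
  have h4 : Real.exp (- aa lam Astar a) < 1 := by rw [Real.exp_lt_one_iff]; linarith
  have h5 := Real.exp_pos (- aa lam Astar a)
  unfold kap
  constructor
  · apply mul_pos <;> linarith
  · nlinarith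

lemma split (hlam : 1 < lam) (hA : 0 < Astar) (T : CM lam Astar) {a : ℝ} (ha : 0 < a)
    (ha' : aa lam Astar a < a) {ψ : Circle1 → ℝ} (h : Cone a ψ) :
    ∃ φ : Circle1 → ℝ, Cone a φ ∧ ∀ u : Circle1 → ℝ, Continuous u →
      ∫ x : Circle1, ψ x * u (T.toMap x) =
        kap lam Astar a * (∫ x : Circle1, ψ x) * (∫ x : Circle1, u x) + ∫ x : Circle1, φ x * u x := by
  obtain ⟨φ, hφ, h1⟩ := push hlam hA T ha.le h
  change Cone (aa lam Astar a) φ at hφ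
  have hpos := aa_pos hlam hA ha
  set b := aa lam Astar a with hb
  set M := ∫ x : Circle1, ψ x with hM
  have hM' : ∫ x : Circle1, φ x = M := by
    have := h1 (fun _ => 1) continuous_const
    simpa using this.symm
  have hMnn : 0 ≤ M := integral_nonneg h.nonneg
  have hlow : ∀ x, Real.exp (-b) * M ≤ φ x := fun x => by
    rw [← hM']; exact hφ.lower hpos.le x
  set c := kap lam Astar a * M with hc
  have hba : b / a < 1 := by rwa [div_lt_one ha]
  have hba0 : 0 < b / a := by positivity
  have hc' : ∀ x, c ≤ (1 - b / a) * φ x := by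
    intro x
    have : c = (1 - b / a) * (Real.exp (-b) * M) := by rw [hc, kap, ← hb]; ring
    rw [this]
    exact mul_le_mul_of_nonneg_left (hlow x) (by linarith)
  refine ⟨fun x => φ x - c, ⟨hφ.cont.sub continuous_const, ?_, ?_⟩, ?_⟩
  · intro x
    have := hc' x; have := hφ.nonneg x; nlinarith
  · intro x y
    have h2 := hφ.le x y
    set s := |x - y|
    have hs : 0 ≤ s := abs_nonneg _
    have hconv : Real.exp (b * s) ≤ (b / a) * Real.exp (a * s) + (1 - b / a) := by
      have := convexOn_exp.2 (mem_univ (a * s)) (mem_univ 0) hba0.le (by linarith : 0 ≤ 1 - b / a) (by ring)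
      simp only [smul_eq_mul, mul_zero, add_zero, Real.exp_zero, mul_one] at this
      have e : b / a * (a * s) = b * s := by field_simp
      rwa [e] at this
    have h3 := hc' y
    have h4 : 1 ≤ Real.exp (a * s) := Real.one_le_exp (by positivity)
    have h5 := mul_le_mul_of_nonneg_right hconv (hφ.nonneg y)
    have h6 := mul_le_mul_of_nonneg_left h3 (by linarith : 0 ≤ Real.exp (a * s) - 1)
    nlinarith
  · intro u hu
    rw [h1 u hu]
    have : ∀ x, (φ x - c) * u x = φ x * u x - c * u x := fun x => by ring
    simp only [this]
    have e := integral_sub (f := fun x => φ x * u x) (g := fun x => c * u x)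
      (integ (hφ.cont.mul hu)) (integ (continuous_const.mul hu))
    rw [e, integral_const_mul]
    ring

lemma int_bd {ψ u : Circle1 → ℝ} (hψ : Continuous ψ) (h0 : ∀ x, 0 ≤ ψ x) {B : ℝ} (hB : ∀ x, |u x| ≤ B) :
    |∫ x : Circle1, ψ x * u x| ≤ (∫ x : Circle1, ψ x) * B := by
  have := norm_integral_le_of_norm_le (f := fun x : Circle1 => ψ x * u x) (g := fun x => ψ x * B)
    (μ := volume) ((integ hψ).mul_const B) (Eventually.of_forall fun x => by
      rw [Real.norm_eq_abs, abs_mul, abs_of_nonneg (h0 x)]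
      exact mul_le_mul_of_nonneg_left (hB x) (h0 x))
  rw [integral_mul_const] at this
  exact this

lemma mix (hlam : 1 < lam) (hA : 0 < Astar) (T : CM lam Astar) {a : ℝ} (ha : 0 < a)
    (ha' : aa lam Astar a < a) (n : ℕ) : ∀ {ψ₁ ψ₂ : Circle1 → ℝ} (M : ℝ), Cone a ψ₁ → Cone a ψ₂ →
    (∫ x : Circle1, ψ₁ x) = M → (∫ x : Circle1, ψ₂ x) = M →
    ∀ (u : Circle1 → ℝ) (B : ℝ), Continuous u → (∀ x, |u x| ≤ B) →
      |(∫ x : Circle1, ψ₁ x * u (T.toMap^[n] x)) - ∫ x : Circle1, ψ₂ x * u (T.toMap^[n] x)|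
        ≤ 2 * M * B * (1 - kap lam Astar a) ^ n := by
  induction n with
  | zero =>
    intro ψ₁ ψ₂ M h1 h2 hM1 hM2 u B hu hB
    have e1 := int_bd h1.cont h1.nonneg hB
    have e2 := int_bd h2.cont h2.nonneg hB
    rw [hM1] at e1
    rw [hM2] at e2
    simp only [Function.iterate_zero, id, pow_zero, mul_one]
    refine (abs_sub _ _).trans ?_
    linarith
  | succ n ih =>
    intro ψ₁ ψ₂ M h1 h2 hM1 hM2 u B hu hB
    obtain ⟨φ₁, c1, e1⟩ := split hlam hA T ha ha' h1
    obtain ⟨φ₂, c2, e2⟩ := split hlam hA T ha ha' h2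
    have m1 : ∫ x : Circle1, φ₁ x = (1 - kap lam Astar a) * M := by
      have := e1 (fun _ => 1) continuous_const
      simp [hM1] at this
      linarith
    have m2 : ∫ x : Circle1, φ₂ x = (1 - kap lam Astar a) * M := by
      have := e2 (fun _ => 1) continuous_const
      simp [hM2] at this
      linarith
    have huc := hu.comp (iter_cont T n)
    have f1 := e1 _ huc
    have f2 := e2 _ huc
    have := ih _ c1 c2 m1 m2 u B hu hB
    simp only [Function.comp] at f1 f2
    simp only [Function.iterate_succ, Function.comp]
    rw [f1, f2, hM1, hM2]
    rw [add_sub_add_left_eq_sub]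
    refine this.trans (le_of_eq ?_)
    ring

lemma mix1 (hlam : 1 < lam) (hA : 0 < Astar) (T : CM lam Astar) {a : ℝ} (ha : 0 < a)
    (ha' : aa lam Astar a < a) (n : ℕ) {ψ : Circle1 → ℝ} (h : Cone a ψ)
    {u : Circle1 → ℝ} {B : ℝ} (hu : Continuous u) (hB : ∀ x, |u x| ≤ B) :
      |(∫ x : Circle1, ψ x * u (T.toMap^[n] x)) - (∫ x : Circle1, ψ x) * ∫ x : Circle1, u (T.toMap^[n] x)|
        ≤ 2 * (∫ x : Circle1, ψ x) * B * (1 - kap lam Astar a) ^ n := by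
  have h0 : 0 ≤ ∫ x : Circle1, ψ x := integral_nonneg h.nonneg
  have := mix hlam hA T ha ha' n (∫ x : Circle1, ψ x) h
    (cone_const ha.le h0) rfl (by simp) u B hu hB
  rwa [integral_const_mul] at this

/-- Lipschitz approximation of continuous functions. -/
lemma lip_approx {g : Circle1 → ℝ} (hg : Continuous g) {ε : ℝ} (hε : 0 < ε) :
    ∃ (K : NNReal) (f : Circle1 → ℝ), LipschitzWith K f ∧ ∀ x, |g x - f x| ≤ ε := by
  obtain ⟨B, hB⟩ : ∃ B, ∀ x, |g x| ≤ B := by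
    obtain ⟨B, hB⟩ := isCompact_univ.exists_bound_of_continuousOn hg.continuousOn
    exact ⟨B, fun x => hB x (mem_univ x)⟩
  have huc := CompactSpace.uniformContinuous_of_continuous hg
  obtain ⟨δ, hδ, hd⟩ := Metric.uniformContinuous_iff.1 huc ε hε
  have hB0 : 0 ≤ B := (abs_nonneg _).trans (hB 0)
  let K : NNReal := ⟨2 * B / δ, by positivity⟩
  have hK : ∀ x y, g x ≤ g y + K * dist x y + ε := by
    intro x y
    rcases lt_or_ge (dist x y) δ with h | h
    · have := hd h
      rw [Real.dist_eq] at this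
      have h2 := (abs_lt.1 this).2
      have : 0 ≤ (K:ℝ) * dist x y := by positivity
      linarith
    · have h1 : 2 * B ≤ K * dist x y := by
        change 2 * B ≤ 2 * B / δ * dist x y
        calc 2 * B = 2 * B / δ * δ := by field_simp
          _ ≤ _ := by gcongr
      have := (abs_le.1 (hB x)).2
      have := (abs_le.1 (hB y)).1
      linarith
  have hbdd : ∀ x, BddBelow (range fun y => g y + K * dist x y) := by
    intro x
    refine ⟨g x - ε, ?_⟩
    rintro _ ⟨y, rfl⟩
    have := hK x y
    simp only; linarith
  refine ⟨K, fun x => ⨅ y, (g y + K * dist x y), ?_, ?_⟩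
  · apply LipschitzWith.of_le_add_mul
    intro x x'
    have : (⨅ y, (g y + K * dist x y)) - K * dist x x' ≤ ⨅ y, (g y + K * dist x' y) := by
      apply le_ciInf
      intro y
      have h1 := ciInf_le (hbdd x) y
      have h2 : (K:ℝ) * dist x y ≤ K * (dist x x' + dist x' y) := by
        gcongr; exact dist_triangle _ _ _
      linarith
    linarith
  · intro x
    have h1 := ciInf_le (hbdd x) x
    simp only [dist_self, mul_zero, add_zero] at h1
    have h2 : g x - ε ≤ ⨅ y, (g y + K * dist x y) := by
      apply le_ciInf
      intro y
      have := hK x y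
      linarith
    rw [abs_le]; constructor <;> linarith

end S11
namespace S11

variable {lam Astar : ℝ}

lemma cbound {g : Circle1 → ℝ} (hg : Continuous g) : ∃ B, 0 ≤ B ∧ ∀ x, |g x| ≤ B := by
  obtain ⟨B, hB⟩ := isCompact_univ.exists_bound_of_continuousOn hg.continuousOn
  exact ⟨B, (norm_nonneg _).trans (hB 0 (mem_univ _)), fun x => hB x (mem_univ x)⟩

lemma integ_mul {g ρ : Circle1 → ℝ} (hg : Continuous g) (hρ : Integrable ρ (volume : Measure Circle1)) :
    Integrable (fun x => g x * ρ x) (volume : Measure Circle1) := by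
  obtain ⟨B, _, hB⟩ := cbound hg
  exact hρ.bdd_mul (c := B) hg.aestronglyMeasurable (Eventually.of_forall hB)

lemma exp_inv (T : CM lam Astar) {ρ : Circle1 → ℝ} (hρ : IsSRBDensity T ρ) {g : Circle1 → ℝ}
    (hg : Continuous g) : ∫ x : Circle1, g (T.toMap x) * ρ x = ∫ x : Circle1, g x * ρ x := by
  have hae : AEMeasurable (fun x => ENNReal.ofReal (ρ x)) (volume : Measure Circle1) :=
    hρ.1.1.aestronglyMeasurable.aemeasurable.ennreal_ofReal
  have key : ∀ u : Circle1 → ℝ, ∫ x, u x ∂(volume.withDensity (fun x => ENNReal.ofReal (ρ x)))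
      = ∫ x : Circle1, u x * ρ x := by
    intro u
    rw [integral_withDensity_eq_integral_toReal_smul₀ hae (Eventually.of_forall fun x => ENNReal.ofReal_lt_top)]
    congr 1
    funext x
    rw [ENNReal.toReal_ofReal (hρ.1.2.2 x), smul_eq_mul, mul_comm]
  rw [← key, ← key]
  conv_rhs => rw [← hρ.2.2]
  rw [integral_map (toMap_cont T).measurable.aemeasurable hg.aestronglyMeasurable]

lemma exp_inv_iter (T : CM lam Astar) {ρ : Circle1 → ℝ} (hρ : IsSRBDensity T ρ) (n : ℕ) : ∀ {g : Circle1 → ℝ}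
    (_ : Continuous g), ∫ x : Circle1, g (T.toMap^[n] x) * ρ x = ∫ x : Circle1, g x * ρ x := by
  induction n with
  | zero => intro g hg; rfl
  | succ n ih =>
    intro g hg
    rw [← ih hg]
    exact exp_inv T hρ (hg.comp (iter_cont T n))

noncomputable def a0 (lam Astar : ℝ) : ℝ := Astar / (lam * (lam - 1))

lemma a0_pos (hlam : 1 < lam) (hA : 0 < Astar) : 0 < a0 lam Astar := by
  unfold a0
  have : 0 < lam - 1 := by linarith
  positivity

lemma aa_a0 (hlam : 1 < lam) : aa lam Astar (a0 lam Astar) = a0 lam Astar := by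
  unfold aa a0
  have : lam - 1 ≠ 0 := by linarith
  have : lam ≠ 0 := by linarith
  field_simp
  ring

lemma aa_lt (hlam : 1 < lam) {a : ℝ} (ha : a0 lam Astar < a) : aa lam Astar a < a := by
  have h1 := aa_a0 (Astar := Astar) hlam
  have h2 : aa lam Astar a - aa lam Astar (a0 lam Astar) = (a - a0 lam Astar) / lam := by
    unfold aa; ring
  have h3 : (a - a0 lam Astar) / lam < a - a0 lam Astar := div_lt_self (by linarith) hlam
  linarith

lemma exp_lim (hlam : 1 < lam) (hA : 0 < Astar) (T : CM lam Astar) {ρ : Circle1 → ℝ} (hρ : IsSRBDensity T ρ)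
    {g : Circle1 → ℝ} (hg : Continuous g) :
    Tendsto (fun N : ℕ => ∫ x : Circle1, g (T.toMap^[N] x)) atTop (𝓝 (∫ x : Circle1, g x * ρ x)) := by
  obtain ⟨B, hB0, hB⟩ := cbound hg
  rw [Metric.tendsto_atTop]
  intro ε hε
  set ε' := ε / (8 * (B + 1)) with hε'
  have he' : 0 < ε' := by positivity
  obtain ⟨ψc, hc1, -⟩ := hρ.1.1.exists_boundedContinuous_integral_sub_le he'
  obtain ⟨K, ψ, hψ, happ⟩ := lip_approx ψc.continuous he'
  have hψc := hψ.continuous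
  have hl1 : ∫ x : Circle1, |ρ x - ψ x| ≤ 2 * ε' := by
    have h1 : ∫ x : Circle1, |ρ x - ψ x| ≤ ∫ x : Circle1, (‖ρ x - ψc x‖ + ε') := by
      apply integral_mono
      · exact (hρ.1.1.sub (integ hψc)).abs
      · exact ((hρ.1.1.sub (integ ψc.continuous)).norm).add (integrable_const _)
      · intro x
        have := happ x
        have := abs_sub_le (ρ x) (ψc x) (ψ x)
        simp only [Real.norm_eq_abs]; linarith
    have i1 : Integrable (fun x => ‖ρ x - ψc x‖) (volume : Measure Circle1) :=
      (hρ.1.1.sub (integ ψc.continuous)).norm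
    rw [integral_add i1 (integrable_const _)] at h1
    simp at h1 hc1
    linarith
  obtain ⟨D, hD0, hD⟩ := cbound hψc
  have hcone : Cone K (fun x => ψ x + (D + 1)) := by
    apply cone_lip
    · have := hψ.add (LipschitzWith.const (α := Circle1) (D + 1))
      simpa using this
    · intro x
      have := (abs_le.1 (hD x)).1
      linarith
  set a := a0 lam Astar + K + 1 with ha
  have hapos : 0 < a := by have := a0_pos hlam hA; positivity
  have halt : aa lam Astar a < a := aa_lt hlam (by have := K.2; rw [ha]; have : (0:ℝ) ≤ K := K.2; linarith)
  have hcone' := hcone.mono (b := a) (by have := a0_pos hlam hA; linarith)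
  have hk := kap_mem hlam hA hapos halt
  set M := ∫ x : Circle1, (ψ x + (D + 1)) with hM
  have hMeq : M = (∫ x : Circle1, ψ x) + (D + 1) := by
    rw [hM, integral_add (integ hψc) (integrable_const _)]; simp
  have htend : Tendsto (fun n : ℕ => 2 * M * B * (1 - kap lam Astar a) ^ n) atTop (𝓝 0) := by
    have := (tendsto_pow_atTop_nhds_zero_of_lt_one (r := 1 - kap lam Astar a)
      (by linarith [hk.2]) (by linarith [hk.1])).const_mul (2 * M * B)
    simpa using this
  obtain ⟨N0, hN0⟩ := (htend.eventually (gt_mem_nhds (by positivity : 0 < ε / 2))).exists_forall_of_atTop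
  refine ⟨N0, fun N hN => ?_⟩
  have h1 := hN0 N hN
  have hgN := hg.comp (iter_cont T N)
  have h2 := mix1 hlam hA T hapos halt N hcone' hg hB
  have h3 : ∫ x : Circle1, (ψ x + (D + 1)) * g (T.toMap^[N] x) =
      (∫ x : Circle1, ψ x * g (T.toMap^[N] x)) + (D + 1) * ∫ x : Circle1, g (T.toMap^[N] x) := by
    have i1 : Integrable (fun x => ψ x * g (T.toMap^[N] x)) (volume : Measure Circle1) :=
      integ (hψc.mul hgN)
    have i2 : Integrable (fun x => (D + 1) * g (T.toMap^[N] x)) (volume : Measure Circle1) :=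
      integ (continuous_const.mul hgN)
    rw [← integral_const_mul, ← integral_add i1 i2]
    congr 1; funext x; ring
  rw [h3, ← hM] at h2
  have h4 := exp_inv_iter T hρ N hg
  have h5 : |(∫ x : Circle1, g (T.toMap^[N] x) * ρ x) - ∫ x : Circle1, ψ x * g (T.toMap^[N] x)| ≤ 2 * ε' * B := by
    have i1 : Integrable (fun x => ψ x * g (T.toMap^[N] x)) (volume : Measure Circle1) :=
      integ (hψc.mul hgN)
    have i2 : Integrable (fun x => g (T.toMap^[N] x) * ρ x) (volume : Measure Circle1) :=
      integ_mul hgN hρ.1.1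
    rw [← integral_sub i2 i1]
    have := norm_integral_le_of_norm_le (f := fun x : Circle1 => g (T.toMap^[N] x) * ρ x - ψ x * g (T.toMap^[N] x))
      (g := fun x => |ρ x - ψ x| * B)
      (μ := volume) ((hρ.1.1.sub (integ hψc)).abs.mul_const B) (Eventually.of_forall fun x => by
        rw [Real.norm_eq_abs]
        have : g (T.toMap^[N] x) * ρ x - ψ x * g (T.toMap^[N] x) = (ρ x - ψ x) * g (T.toMap^[N] x) := by ring
        rw [this, abs_mul]
        exact mul_le_mul_of_nonneg_left (hB _) (abs_nonneg _))
    rw [integral_mul_const] at this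
    refine this.trans ?_
    gcongr
  have h6 : |1 - ∫ x : Circle1, ψ x| ≤ 2 * ε' := by
    have e := integral_sub hρ.1.1 (integ hψc)
    rw [hρ.1.2.1] at e
    rw [← e]
    exact (abs_integral_le_integral_abs).trans hl1
  have h7 : |∫ x : Circle1, g (T.toMap^[N] x)| ≤ B := by
    have := int_bd (ψ := fun _ => 1) (u := fun x => g (T.toMap^[N] x)) continuous_const (fun _ => zero_le_one) (fun x => hB _)
    simpa using this
  set I := ∫ x : Circle1, g (T.toMap^[N] x)
  set J := ∫ x : Circle1, ψ x * g (T.toMap^[N] x)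
  set P := ∫ x : Circle1, ψ x
  rw [← h4, Real.dist_eq, abs_sub_comm]
  set E := ∫ x : Circle1, g (T.toMap^[N] x) * ρ x
  have e : E - I = (E - J) + (J + (D + 1) * I - M * I) - (1 - P) * I := by rw [hMeq]; ring
  have h8 : |(1 - P) * I| ≤ 2 * ε' * B := by
    rw [abs_mul]; gcongr
  have h9 : 4 * ε' * B < ε / 2 := by
    have : 4 * ε' * (B + 1) = ε / 2 := by rw [hε']; field_simp; norm_num
    nlinarith
  rw [e]
  calc _ ≤ |E - J| + |J + (D + 1) * I - M * I| + |(1 - P) * I| :=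
        (abs_sub _ _).trans (by gcongr; exact abs_add_le _ _)
    _ < ε := by linarith

lemma exp_rate (hlam : 1 < lam) (hA : 0 < Astar) (T : CM lam Astar) {ρ : Circle1 → ℝ} (hρ : IsSRBDensity T ρ)
    {a : ℝ} (ha : a0 lam Astar < a) {g : Circle1 → ℝ} (hg : Continuous g) {B : ℝ} (hB : ∀ x, |g x| ≤ B) (n : ℕ) :
    |(∫ x : Circle1, g x * ρ x) - ∫ x : Circle1, g (T.toMap^[n] x)| ≤ 2 * B * (1 - kap lam Astar a) ^ n := by
  have hapos : 0 < a := (a0_pos hlam hA).trans ha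
  have halt := aa_lt (Astar := Astar) hlam ha
  have hl := ((exp_lim hlam hA T hρ hg).comp (tendsto_add_atTop_nat n)).sub_const
    (∫ x : Circle1, g (T.toMap^[n] x))
  refine le_of_tendsto hl.abs (Eventually.of_forall fun N => ?_)
  obtain ⟨φ, hφ, h1⟩ := pushIter hlam hA T hapos.le halt.le N (cone_const hapos.le zero_le_one)
  have m := h1 (fun _ => 1) continuous_const
  simp only [mul_one, integral_const, probReal_univ, smul_eq_mul] at m
  have h2 := h1 _ (hg.comp (iter_cont T n))
  have h3 := mix1 hlam hA T hapos halt n hφ hg hB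
  rw [← m] at h3
  simp only [Function.comp, one_mul, mul_one] at h2 h3 ⊢
  rw [← h2] at h3
  have e : ∀ x, T.toMap^[N + n] x = T.toMap^[n] (T.toMap^[N] x) := fun x => by
    rw [← Function.iterate_add_apply, add_comm]
  simp only [e]
  exact h3

lemma corr (hlam : 1 < lam) (hA : 0 < Astar) (T : CM lam Astar) {ρ : Circle1 → ℝ} (hρ : IsSRBDensity T ρ)
    {K : NNReal} {f : Circle1 → ℝ} (hf : LipschitzWith K f) {B : ℝ} (hB : ∀ x, |f x| ≤ B)
    (hz : ∫ x : Circle1, f x * ρ x = 0) (k : ℕ) :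
    |∫ x : Circle1, (f x * f (T.toMap^[k] x)) * ρ x| ≤
      4 * B * (3 * B + 2) * (1 - kap lam Astar (a0 lam Astar + K + 1)) ^ k := by
  have hB0 : 0 ≤ B := (abs_nonneg _).trans (hB 0)
  have hfc := hf.continuous
  have hK : (0:ℝ) ≤ K := K.2
  have h0 := a0_pos hlam hA
  set a := a0 lam Astar + K + 1 with ha
  have hapos : 0 < a := by positivity
  have ha0 : a0 lam Astar < a := by linarith
  have halt := aa_lt (Astar := Astar) hlam ha0
  have hk := kap_mem hlam hA hapos halt
  set θ := 1 - kap lam Astar a with hθ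
  have hθ0 : 0 < θ := by linarith [hk.2]
  have hu : Continuous (fun x => f x * f (T.toMap^[k] x)) := hfc.mul (hfc.comp (iter_cont T k))
  refine le_of_tendsto (exp_lim hlam hA T hρ hu).abs (Eventually.of_forall fun N => ?_)
  obtain ⟨φ, hφ, h1⟩ := pushIter hlam hA T h0.le (aa_a0 hlam).le N (cone_const h0.le zero_le_one)
  have m := h1 (fun _ => 1) continuous_const
  simp only [mul_one, integral_const, probReal_univ, smul_eq_mul] at m
  have h2 := h1 _ hu
  simp only [one_mul] at h2
  rw [h2]
  have hcone : Cone K (fun x => f x + (B + 1)) := by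
    apply cone_lip
    · have := hf.add (LipschitzWith.const (α := Circle1) (B + 1))
      simpa using this
    · intro x
      have := (abs_le.1 (hB x)).1
      linarith
  have hψ : Cone a (fun x => φ x * (f x + (B + 1))) := (hφ.mul hcone).mono (by linarith)
  have r := exp_rate hlam hA T hρ ha0 hfc hB k
  rw [hz, zero_sub, abs_neg] at r
  have key : ∀ ψ : Circle1 → ℝ, Cone a ψ → |∫ x : Circle1, ψ x * f (T.toMap^[k] x)| ≤
      (∫ x : Circle1, ψ x) * (4 * B * θ ^ k) := by
    intro ψ hψ
    have h3 := mix1 hlam hA T hapos halt k hψ hfc hB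
    have h4 : 0 ≤ ∫ x : Circle1, ψ x := integral_nonneg hψ.nonneg
    set I := ∫ x : Circle1, f (T.toMap^[k] x)
    set M := ∫ x : Circle1, ψ x
    set J := ∫ x : Circle1, ψ x * f (T.toMap^[k] x)
    have e : J = (J - M * I) + M * I := by ring
    rw [e]
    refine (abs_add_le _ _).trans ?_
    rw [abs_mul M, abs_of_nonneg h4]
    have := mul_le_mul_of_nonneg_left r h4
    rw [← hθ] at this h3
    linarith
  have k1 := key _ hψ
  have k2 := key _ (hφ.mono ha0.le)
  rw [← m] at k2
  have m2 : ∫ x : Circle1, φ x * (f x + (B + 1)) ≤ 2 * B + 1 := by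
    have := int_bd (u := fun x => f x + (B + 1)) (B := 2 * B + 1) hφ.cont hφ.nonneg (fun x => by
      have := abs_le.1 (hB x)
      rw [abs_le]; constructor <;> linarith)
    rw [← m, one_mul] at this
    exact (le_abs_self _).trans this
  have hfk := hfc.comp (iter_cont T k)
  have e : ∫ x : Circle1, φ x * (f x * f (T.toMap^[k] x)) =
      (∫ x : Circle1, φ x * (f x + (B + 1)) * f (T.toMap^[k] x)) - (B + 1) * ∫ x : Circle1, φ x * f (T.toMap^[k] x) := by
    have i1 : Integrable (fun x => φ x * (f x + (B + 1)) * f (T.toMap^[k] x)) (volume : Measure Circle1) :=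
      integ (hψ.cont.mul hfk)
    have i2 : Integrable (fun x => (B + 1) * (φ x * f (T.toMap^[k] x))) (volume : Measure Circle1) :=
      integ (continuous_const.mul (hφ.cont.mul hfk))
    rw [← integral_const_mul, ← integral_sub i1 i2]
    congr 1; funext x; ring
  rw [e]
  refine (abs_sub _ _).trans ?_
  rw [abs_mul, abs_of_nonneg (by linarith : 0 ≤ B + 1)]
  have hp : 0 ≤ 4 * B * θ ^ k := by positivity
  have k3 := mul_le_mul_of_nonneg_right m2 hp
  have k4 := mul_le_mul_of_nonneg_left k2 (by linarith : 0 ≤ B + 1)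
  nlinarith

end S11
namespace S11

variable {lam Astar : ℝ}

lemma var_lim (T : CM lam Astar) {ρ : Circle1 → ℝ} (hρ : IsSRBDensity T ρ) {g : Circle1 → ℝ}
    (hg : Continuous g)
    (hs : Summable (fun k : ℕ => ∫ x : Circle1, (g x * g (T.toMap^[k+1] x)) * ρ x)) :
    Tendsto (fun m : ℕ => ∫ x : Circle1, ((m : ℝ)⁻¹ * (∑ k ∈ Finset.range m, g (T.toMap^[k] x)) ^ 2) * ρ x)
      atTop (𝓝 ((∫ x : Circle1, (g x) ^ 2 * ρ x) +
        2 * ∑' k : ℕ, ∫ x : Circle1, (g x * g (T.toMap^[k+1] x)) * ρ x)) := by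
  set c : ℕ → ℝ := fun k => ∫ x : Circle1, (g x * g (T.toMap^[k+1] x)) * ρ x with hc
  set c0 := ∫ x : Circle1, (g x) ^ 2 * ρ x with hc0
  set S : ℕ → Circle1 → ℝ := fun m x => ∑ k ∈ Finset.range m, g (T.toMap^[k] x) with hS
  have hgk : ∀ k, Continuous fun x => g (T.toMap^[k] x) := fun k => hg.comp (iter_cont T k)
  have hSc : ∀ m, Continuous (S m) := fun m => continuous_finsetSum _ fun k _ => hgk k
  have hrec : ∀ m, ∫ x : Circle1, (S (m+1) x) ^ 2 * ρ x =
      (∫ x : Circle1, (S m x) ^ 2 * ρ x) + (c0 + 2 * ∑ k ∈ Finset.range m, c k) := by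
    intro m
    have h1 : ∀ x, (S (m+1) x)^2 * ρ x = (S m (T.toMap x))^2 * ρ x + ((g x)^2 * ρ x +
        2 * ∑ k ∈ Finset.range m, (g x * g (T.toMap^[k+1] x)) * ρ x) := by
      intro x
      have e1 : S (m+1) x = S m (T.toMap x) + g x := by
        simp only [hS]; rw [Finset.sum_range_succ']; rfl
      have e2 : ∑ k ∈ Finset.range m, (g x * g (T.toMap^[k+1] x)) * ρ x = g x * S m (T.toMap x) * ρ x := by
        simp only [hS]; rw [Finset.mul_sum, Finset.sum_mul]; rfl
      rw [e1, e2]; ring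
    have i1 : Integrable (fun x => (S m (T.toMap x))^2 * ρ x) (volume : Measure Circle1) :=
      integ_mul (((hSc m).comp (toMap_cont T)).pow 2) hρ.1.1
    have i2 : Integrable (fun x => (g x)^2 * ρ x) (volume : Measure Circle1) :=
      integ_mul (hg.pow 2) hρ.1.1
    have i3 : ∀ k ∈ Finset.range m, Integrable (fun x => (g x * g (T.toMap^[k+1] x)) * ρ x) (volume : Measure Circle1) :=
      fun k _ => integ_mul (hg.mul (hgk (k+1))) hρ.1.1
    have i4 : Integrable (fun x => 2 * ∑ k ∈ Finset.range m, (g x * g (T.toMap^[k+1] x)) * ρ x) (volume : Measure Circle1) :=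
      (integrable_finsetSum _ i3).const_mul 2
    have i5 : Integrable (fun x => (g x)^2 * ρ x + 2 * ∑ k ∈ Finset.range m, (g x * g (T.toMap^[k+1] x)) * ρ x) (volume : Measure Circle1) := i2.add i4
    simp_rw [h1]
    rw [integral_add i1 i5, integral_add i2 i4, integral_const_mul, integral_finsetSum _ i3]
    rw [exp_inv T hρ (g := fun x => (S m x)^2) ((hSc m).pow 2)]
  have hsum : ∀ m, ∫ x : Circle1, (S m x) ^ 2 * ρ x = ∑ i ∈ Finset.range m, (c0 + 2 * ∑ k ∈ Finset.range i, c k) := by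
    intro m
    induction m with
    | zero => simp [hS]
    | succ m ih => rw [hrec, ih, Finset.sum_range_succ]
  have hb : Tendsto (fun i : ℕ => c0 + 2 * ∑ k ∈ Finset.range i, c k) atTop (𝓝 (c0 + 2 * ∑' k, c k)) :=
    (hs.hasSum.tendsto_sum_nat.const_mul 2).const_add c0
  refine hb.cesaro.congr fun m => ?_
  rw [← hsum, ← integral_const_mul]
  congr 1; funext x; ring

lemma dist_le_dC1 (T₁ T₂ : CM lam Astar) (x : Circle1) : dist (T₁.toMap x) (T₂.toMap x) ≤ dC1 T₁ T₂ := by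
  unfold dC1
  have hb : BddAbove (Set.range fun x : Circle1 => dist (T₁.toMap x) (T₂.toMap x)) :=
    (isCompact_range ((toMap_cont T₁).dist (toMap_cont T₂))).bddAbove
  have h1 := le_ciSup hb x
  have h2 : 0 ≤ ⨆ x : Circle1, |T₁.dmap x - T₂.dmap x| := Real.iSup_nonneg fun _ => abs_nonneg _
  linarith

lemma iter_contOn {η : ℝ} (hη : 0 < η) {γ : ℝ → CM lam Astar} (hγ : HolderCurve η γ) (n : ℕ) (x : Circle1) :
    ContinuousOn (fun t => (γ t).toMap^[n] x) (Icc 0 1) := by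
  obtain ⟨H, hH⟩ := hγ
  induction n with
  | zero => exact continuousOn_const
  | succ n ih =>
    intro t ht
    have ih' := ih t ht
    simp only [Function.iterate_succ_apply']
    have hlim : Tendsto (fun s => (γ t).toMap ((γ s).toMap^[n] x)) (𝓝[Icc 0 1] t) (𝓝 ((γ t).toMap ((γ t).toMap^[n] x))) :=
      ((toMap_cont (γ t)).tendsto _).comp ih'
    have hz : Tendsto (fun s : ℝ => H * |s - t| ^ η) (𝓝[Icc 0 1] t) (𝓝 0) := by
      have hc : Continuous (fun s : ℝ => H * |s - t| ^ η) := by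
        have : Continuous fun s : ℝ => |s - t| := by fun_prop
        exact continuous_const.mul (this.rpow_const fun _ => Or.inr hη.le)
      have := hc.tendsto t
      simp [Real.zero_rpow hη.ne'] at this
      exact this.mono_left nhdsWithin_le_nhds
    refine hlim.congr_dist ?_
    refine squeeze_zero' (Eventually.of_forall fun _ => dist_nonneg) ?_ hz
    filter_upwards [self_mem_nhdsWithin] with s hs
    rw [dist_comm]
    exact (dist_le_dC1 _ _ _).trans (hH s hs t ht)

lemma exp_contOn (hlam : 1 < lam) (hA : 0 < Astar) {γ : ℝ → CM lam Astar} {ρ : ℝ → Circle1 → ℝ}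
    (hρ : ∀ t ∈ Icc (0:ℝ) 1, IsSRBDensity (γ t) (ρ t)) {h : ℝ → Circle1 → ℝ} {B : ℝ}
    (hc : ∀ t ∈ Icc (0:ℝ) 1, Continuous (h t)) (hB : ∀ t ∈ Icc (0:ℝ) 1, ∀ x, |h t x| ≤ B)
    (hn : ∀ n x, ContinuousOn (fun t => h t ((γ t).toMap^[n] x)) (Icc 0 1)) :
    ContinuousOn (fun t => ∫ x : Circle1, h t x * ρ t x) (Icc 0 1) := by
  set a := a0 lam Astar + 1 with ha
  have hapos : 0 < a := by have := a0_pos hlam hA; linarith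
  have hk := kap_mem hlam hA hapos (aa_lt hlam (by linarith))
  have hunif : TendstoUniformlyOn (fun (n : ℕ) t => ∫ x : Circle1, h t ((γ t).toMap^[n] x))
      (fun t => ∫ x : Circle1, h t x * ρ t x) atTop (Icc 0 1) := by
    have htend : Tendsto (fun n : ℕ => 2 * B * (1 - kap lam Astar a) ^ n) atTop (𝓝 0) := by
      have := (tendsto_pow_atTop_nhds_zero_of_lt_one (r := 1 - kap lam Astar a)
        (by linarith [hk.2]) (by linarith [hk.1])).const_mul (2 * B)
      simpa using this
    rw [Metric.tendstoUniformlyOn_iff]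
    intro ε hε
    filter_upwards [htend.eventually (gt_mem_nhds hε)] with n hn t ht
    rw [Real.dist_eq]
    exact (exp_rate hlam hA (γ t) (hρ t ht) (by linarith) (hc t ht) (hB t ht) n).trans_lt hn
  refine hunif.continuousOn (Eventually.of_forall fun n => ?_).frequently
  refine continuousOn_of_dominated (bound := fun _ => B) ?_ ?_ (integrable_const _) ?_
  · intro t ht
    exact ((hc t ht).comp (iter_cont (γ t) n)).aestronglyMeasurable
  · intro t ht
    exact Eventually.of_forall fun x => hB t ht _
  · exact Eventually.of_forall fun x => hn n x

end S11
set_option maxHeartbeats 400000 in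
lemma S11.main {lam Astar : ℝ} (hlam : 1 < lam) (hA : 0 < Astar)
    {η : ℝ} (hη : η ∈ Set.Ioo (0 : ℝ) 1)
    (γ : ℝ → CM lam Astar) (hγ : HolderCurve η γ)
    (f : Circle1 → ℝ) {K : NNReal} (hK : LipschitzWith K f)
    (ρhat : ℝ → Circle1 → ℝ) (hρhat : ∀ t ∈ Set.Icc (0 : ℝ) 1, IsSRBDensity (γ t) (ρhat t))
    (m : ℝ → ℝ) (hm : ∀ t, m t = ∫ y : Circle1, f y * ρhat t y) :
    ∃ σ2 : ℝ → ℝ,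
      (∀ t ∈ Set.Icc (0 : ℝ) 1,
        Tendsto (fun M : ℕ => ∫ x : Circle1,
            ((M : ℝ)⁻¹ * (∑ k ∈ Finset.range M,
              (f ((γ t).toMap^[k] x) - m t)) ^ 2) * ρhat t x)
          atTop (𝓝 (σ2 t))) ∧
      (∀ t ∈ Set.Icc (0 : ℝ) 1,
        σ2 t = (∫ x : Circle1, (f x - m t) ^ 2 * ρhat t x) +
          2 * ∑' k : ℕ, ∫ x : Circle1,
            ((f x - m t) * (f ((γ t).toMap^[k+1] x) - m t)) * ρhat t x) ∧
      (∃ Ce : ℝ, 0 < Ce ∧ ∃ θ : ℝ, θ ∈ Set.Ioo (0 : ℝ) 1 ∧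
        ∀ t ∈ Set.Icc (0 : ℝ) 1, ∀ k : ℕ,
          |∫ x : Circle1,
            ((f x - m t) * (f ((γ t).toMap^[k+1] x) - m t)) * ρhat t x| ≤
            Ce * θ ^ (k + 1)) ∧
      (∀ t ∈ Set.Icc (0 : ℝ) 1, 0 ≤ σ2 t) ∧
      (∀ ε : ℝ, 0 < ε → ∃ δ : ℝ, 0 < δ ∧
        ∀ s ∈ Set.Icc (0 : ℝ) 1, ∀ t ∈ Set.Icc (0 : ℝ) 1, |s - t| < δ →
          |σ2 s - σ2 t| < ε) := by
  obtain ⟨B, hB0, hB⟩ := S11.cbound hK.continuous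
  have hmB : ∀ t ∈ Icc (0:ℝ) 1, |m t| ≤ B := by
    intro t ht
    have hρ := hρhat t ht
    have h1 := norm_integral_le_of_norm_le (f := fun x : Circle1 => f x * ρhat t x)
      (g := fun x => B * ρhat t x) (μ := volume) (hρ.1.1.const_mul B) (Eventually.of_forall fun x => by
        rw [Real.norm_eq_abs, abs_mul, abs_of_nonneg (hρ.1.2.2 x)]
        exact mul_le_mul_of_nonneg_right (hB x) (hρ.1.2.2 x))
    rw [integral_const_mul, hρ.1.2.1, mul_one] at h1
    rw [hm]; exact h1
  have hfc : ∀ t, Continuous fun x => f x - m t := fun t => hK.continuous.sub continuous_const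
  have hfB : ∀ t ∈ Icc (0:ℝ) 1, ∀ x, |f x - m t| ≤ 2 * B := by
    intro t ht x
    have h1 := abs_le.1 (hB x)
    have h2 := abs_le.1 (hmB t ht)
    rw [abs_le]; constructor <;> linarith [h1.1, h1.2, h2.1, h2.2]
  have hK0 : (0:ℝ) ≤ K := K.2
  have ha0 := S11.a0_pos hlam hA
  obtain ⟨a, ha⟩ : ∃ a, a = S11.a0 lam Astar + K + 1 := ⟨_, rfl⟩
  have hk := S11.kap_mem hlam hA (a := a) (by linarith) (S11.aa_lt hlam (by linarith))
  obtain ⟨θ, hθ⟩ : ∃ θ, θ = 1 - S11.kap lam Astar a := ⟨_, rfl⟩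
  have hθ0 : 0 < θ := by linarith [hk.2]
  have hθ1 : θ < 1 := by linarith [hk.1]
  obtain ⟨Ce, hCe⟩ : ∃ Ce, Ce = 4 * (2 * B) * (3 * (2 * B) + 2) + 1 := ⟨_, rfl⟩
  have hCe0 : 0 < Ce := by rw [hCe]; positivity
  have hexp : ∀ t ∈ Set.Icc (0 : ℝ) 1, ∀ k : ℕ,
      |∫ x : Circle1, ((f x - m t) * (f ((γ t).toMap^[k+1] x) - m t)) * ρhat t x| ≤
        Ce * θ ^ (k + 1) := by
    intro t ht k
    have hρ := hρhat t ht
    have hlip : LipschitzWith K (fun x => f x - m t) := by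
      have := hK.sub (LipschitzWith.const (α := Circle1) (m t))
      simpa using this
    have hz : ∫ x : Circle1, (f x - m t) * ρhat t x = 0 := by
      have i1 : Integrable (fun x => f x * ρhat t x) (volume : Measure Circle1) :=
        S11.integ_mul hK.continuous hρ.1.1
      have i2 : Integrable (fun x => m t * ρhat t x) (volume : Measure Circle1) :=
        hρ.1.1.const_mul _
      simp_rw [sub_mul]
      rw [integral_sub i1 i2, integral_const_mul, hρ.1.2.1, mul_one]
      rw [← hm]; exact sub_self _
    refine (S11.corr hlam hA (γ t) hρ hlip (hfB t ht) hz (k+1)).trans ?_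
    rw [← ha, ← hθ]
    have : 0 < θ ^ (k+1) := by positivity
    exact mul_le_mul_of_nonneg_right (by linarith) this.le
  have hgeo : Summable fun k : ℕ => Ce * θ ^ (k+1) :=
    ((summable_nat_add_iff 1).2 (summable_geometric_of_lt_one hθ0.le hθ1)).mul_left Ce
  have hsum : ∀ t ∈ Icc (0:ℝ) 1, Summable fun k : ℕ =>
      ∫ x : Circle1, ((f x - m t) * (f ((γ t).toMap^[k+1] x) - m t)) * ρhat t x :=
    fun t ht => Summable.of_norm_bounded hgeo (hexp t ht)
  obtain ⟨σ2, hσ⟩ : ∃ σ2 : ℝ → ℝ, σ2 = fun t => (∫ x : Circle1, (f x - m t) ^ 2 * ρhat t x) +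
          2 * ∑' k : ℕ, ∫ x : Circle1,
            ((f x - m t) * (f ((γ t).toMap^[k+1] x) - m t)) * ρhat t x := ⟨_, rfl⟩
  have hlim : ∀ t ∈ Set.Icc (0 : ℝ) 1,
        Tendsto (fun M : ℕ => ∫ x : Circle1,
            ((M : ℝ)⁻¹ * (∑ k ∈ Finset.range M,
              (f ((γ t).toMap^[k] x) - m t)) ^ 2) * ρhat t x)
          atTop (𝓝 (σ2 t)) := fun t ht => by
    rw [hσ]; have h := S11.var_lim (γ t) (hρhat t ht) (g := fun x => f x - m t) (hfc t) (hsum t ht)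
    exact h
  refine ⟨σ2, hlim, fun t _ => by rw [hσ], ⟨Ce, hCe0, θ, ⟨hθ0, hθ1⟩, hexp⟩, ?_, ?_⟩
  · intro t ht
    refine ge_of_tendsto (hlim t ht) (Eventually.of_forall fun M => ?_)
    exact integral_nonneg fun x => mul_nonneg (by positivity) ((hρhat t ht).1.2.2 x)
  have hit := S11.iter_contOn hη.1 hγ
  have hmc : ContinuousOn m (Icc 0 1) := by
    rw [funext hm]
    exact S11.exp_contOn hlam hA hρhat (h := fun _ => f) (fun _ _ => hK.continuous) (fun _ _ => hB)
      fun n x => hK.continuous.comp_continuousOn (hit n x)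
  have h0c : ContinuousOn (fun t => ∫ x : Circle1, (f x - m t) ^ 2 * ρhat t x) (Icc 0 1) := by
    refine S11.exp_contOn hlam hA hρhat (h := fun t x => (f x - m t) ^ 2) (B := (2 * B) ^ 2)
      (fun t _ => (hfc t).pow 2) (fun t ht x => ?_)
      fun n x => ((hK.continuous.comp_continuousOn (hit n x)).sub hmc).pow 2
    rw [abs_pow]
    exact pow_le_pow_left₀ (abs_nonneg _) (hfB t ht x) 2
  have hkc : ∀ k : ℕ, ContinuousOn (fun t => ∫ x : Circle1,
      ((f x - m t) * (f ((γ t).toMap^[k+1] x) - m t)) * ρhat t x) (Icc 0 1) := by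
    intro k
    refine S11.exp_contOn hlam hA hρhat
      (h := fun t x => (f x - m t) * (f ((γ t).toMap^[k+1] x) - m t)) (B := (2 * B) * (2 * B))
      (fun t _ => (hfc t).mul ((hfc t).comp (S11.iter_cont (γ t) (k+1)))) (fun t ht x => ?_)
      fun n x => ?_
    · rw [abs_mul]
      exact mul_le_mul (hfB t ht x) (hfB t ht _) (abs_nonneg _) (by positivity)
    · simp_rw [← Function.iterate_add_apply]
      exact ((hK.continuous.comp_continuousOn (hit n x)).sub hmc).mul
        ((hK.continuous.comp_continuousOn (hit (k+1+n) x)).sub hmc)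
  have hσc : ContinuousOn σ2 (Icc 0 1) := by
    rw [hσ]; exact h0c.add (continuousOn_const.mul (continuousOn_tsum hkc hgeo fun k t ht => hexp t ht k))
  have huc := isCompact_Icc.uniformContinuousOn_of_continuous hσc
  rw [Metric.uniformContinuousOn_iff] at huc
  intro ε hε
  obtain ⟨δ, hδ, h⟩ := huc ε hε
  exact ⟨δ, hδ, fun s hs t ht hst => h s hs t ht hst⟩

/-- Lemma `lem:sigma`.  For each `t ∈ [0,1]` the limit variance
`σ̂ₜ²(f) = lim_m μ̂ₜ[(m^{−1/2} Σ_{k<m} f̂ₜ∘γₜᵏ)²]` exists and equals the Green–Kubo series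
`μ̂ₜ(f̂ₜ²) + 2Σ_{k≥1} μ̂ₜ(f̂ₜ·(f̂ₜ∘γₜᵏ))`, which converges absolutely at an exponential rate;
moreover `t ↦ σ̂ₜ²(f)` is nonnegative and uniformly continuous on `[0,1]`. -/
theorem statement11 {lam Astar : ℝ} (hlam : 1 < lam) (hA : 0 < Astar)
    {η : ℝ} (hη : η ∈ Set.Ioo (0 : ℝ) 1)
    (γ : ℝ → CM lam Astar) (hγ : HolderCurve η γ)
    (f : Circle1 → ℝ) (hf : ∃ K : NNReal, LipschitzWith K f)
    (ρhat : ℝ → Circle1 → ℝ) (hρhat : ∀ t ∈ Set.Icc (0 : ℝ) 1, IsSRBDensity (γ t) (ρhat t)) :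
    ∃ σ2 : ℝ → ℝ,
      (∀ t ∈ Set.Icc (0 : ℝ) 1,
        Tendsto (fun m : ℕ => ∫ x : Circle1,
            ((m : ℝ)⁻¹ * (∑ k ∈ Finset.range m,
              (f ((γ t).toMap^[k] x) - ∫ y : Circle1, f y * ρhat t y)) ^ 2) * ρhat t x)
          atTop (𝓝 (σ2 t))) ∧
      (∀ t ∈ Set.Icc (0 : ℝ) 1,
        σ2 t = (∫ x : Circle1, (f x - ∫ y : Circle1, f y * ρhat t y) ^ 2 * ρhat t x) +
          2 * ∑' k : ℕ, ∫ x : Circle1,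
            ((f x - ∫ y : Circle1, f y * ρhat t y) *
              (f ((γ t).toMap^[k+1] x) - ∫ y : Circle1, f y * ρhat t y)) * ρhat t x) ∧
      (∃ Ce : ℝ, 0 < Ce ∧ ∃ θ : ℝ, θ ∈ Set.Ioo (0 : ℝ) 1 ∧
        ∀ t ∈ Set.Icc (0 : ℝ) 1, ∀ k : ℕ,
          |∫ x : Circle1,
            ((f x - ∫ y : Circle1, f y * ρhat t y) *
              (f ((γ t).toMap^[k+1] x) - ∫ y : Circle1, f y * ρhat t y)) * ρhat t x| ≤
            Ce * θ ^ (k + 1)) ∧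
      (∀ t ∈ Set.Icc (0 : ℝ) 1, 0 ≤ σ2 t) ∧
      (∀ ε : ℝ, 0 < ε → ∃ δ : ℝ, 0 < δ ∧
        ∀ s ∈ Set.Icc (0 : ℝ) 1, ∀ t ∈ Set.Icc (0 : ℝ) 1, |s - t| < δ →
          |σ2 s - σ2 t| < ε) := by
  obtain ⟨K, hK⟩ := hf
  exact S11.main hlam hA hη γ hγ f hK ρhat hρhat (fun t => ∫ y : Circle1, f y * ρhat t y) (fun _ => rfl)
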